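/- Suppose A is directed (e_j A e_i = 0 whenever j < i) and standardly stratified with respect to the index order (the left regular module A belongs to F(Δ)). Then F(Δ) is closed under cokernels of monomorphisms: for every short exact sequence 0 → X → Y → Z → 0 of finitely generated left A-modules with X, Y ∈ F(Δ), also Z ∈ F(Δ). -/

import Mathlib

/-!
Directedness makes `Δ_i` the module `e_i A e_i` concentrated at the vertex `i`: the trace
`Σ_{l>i} A e_l A e_i` is exactly `{x ∈ A e_i | e_i x = 0}` (`mem_stdTrace_iff`). Consequently
`M ∈ F(Δ)` if and only if every `e_j M` is a finite free module over the corner ring `e_j A e_j`: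

* `M ↦ e_j M` is exact, and sends `Δ_i` to `e_j A e_j` or `0`, so a standard filtration makes
  `e_j M` an iterated extension of free modules (`finFree_corner_of_hasStdFiltration`);
* conversely the subspaces `⊕_{l ≥ m} e_l M` are submodules of `M`, and a basis of `e_j M` refines
  the step from `⊕_{l > j}` to `⊕_{l ≥ j}` by copies of `Δ_j` (`StdChain.upperPart_step`,
  `hasStdFiltration_of_finFree_corner`).

It remains to see that over `R = e_j A e_j` the cokernel of a monomorphism of finite free modules
is free. As `A e_j` is indecomposable, Fitting's lemma shows that each nonunit of `R` is nilpotent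
(`Corner.isNilpotent_of_not_isUnit`), and finite dimensionality then yields `s ≠ 0` with `s r = 0`
for all nonunits `r` (`exists_annihilator_nonunits`). If `v` in a free module has zero annihilator,
then `s v ≠ 0`, so `v` has a unit coordinate and is part of a basis; applying this to the images of
the basis vectors of the submodule one after another gives the claim (`FinFree.coker`).
-/

set_option linter.unusedVariables false
set_option maxHeartbeats 1000000

noncomputable section

/-! ### The corner ring `eAe` of a ring `A` at an idempotent `e` -/

variable {A : Type} [Ring A]

/-- The corner ring `eAe`, realized as `{x : A | e * x = x ∧ x * e = x}`. -/
def Corner (e : A) (_he : e * e = e) : Type := {x : A // e * x = x ∧ x * e = x}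

namespace Corner

variable {e : A} {he : e * e = e}

instance : Zero (Corner e he) := ⟨⟨0, by simp, by simp⟩⟩
instance : Add (Corner e he) :=
  ⟨fun x y => ⟨x.1 + y.1, by rw [mul_add, x.2.1, y.2.1], by rw [add_mul, x.2.2, y.2.2]⟩⟩
instance : Neg (Corner e he) :=
  ⟨fun x => ⟨-x.1, by rw [mul_neg, x.2.1], by rw [neg_mul, x.2.2]⟩⟩
instance : Mul (Corner e he) :=
  ⟨fun x y => ⟨x.1 * y.1, by rw [← mul_assoc, x.2.1], by rw [mul_assoc, y.2.2]⟩⟩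
instance : One (Corner e he) := ⟨⟨e, he, he⟩⟩

instance : AddCommGroup (Corner e he) where
  add_assoc a b c := Subtype.ext (add_assoc _ _ _)
  zero_add a := Subtype.ext (zero_add _)
  add_zero a := Subtype.ext (add_zero _)
  add_comm a b := Subtype.ext (add_comm _ _)
  neg_add_cancel a := Subtype.ext (neg_add_cancel _)
  nsmul := nsmulRec
  zsmul := zsmulRec

instance instRing : Ring (Corner e he) :=
  { (inferInstance : AddCommGroup (Corner e he)) with
    mul := (· * ·)
    one := 1
    mul_assoc := fun a b c => Subtype.ext (mul_assoc _ _ _)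
    one_mul := fun a => Subtype.ext a.2.1
    mul_one := fun a => Subtype.ext a.2.2
    left_distrib := fun a b c => Subtype.ext (left_distrib _ _ _)
    right_distrib := fun a b c => Subtype.ext (right_distrib _ _ _)
    zero_mul := fun a => Subtype.ext (zero_mul _)
    mul_zero := fun a => Subtype.ext (mul_zero _) }

section Scalars

variable {k : Type} [CommRing k] [Algebra k A]

instance : SMul k (Corner e he) :=
  ⟨fun c x => ⟨c • x.1, by rw [mul_smul_comm, x.2.1], by rw [smul_mul_assoc, x.2.2]⟩⟩

instance instModulek : Module k (Corner e he) where
  one_smul x := Subtype.ext (one_smul k x.1)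
  mul_smul c d x := Subtype.ext (mul_smul c d x.1)
  smul_zero c := Subtype.ext (smul_zero c)
  smul_add c x y := Subtype.ext (smul_add c x.1 y.1)
  add_smul c d x := Subtype.ext (add_smul c d x.1)
  zero_smul x := Subtype.ext (zero_smul k x.1)

instance instAlgebrak : Algebra k (Corner e he) :=
  Algebra.ofModule (fun c x y => Subtype.ext (smul_mul_assoc c x.1 y.1))
    (fun c x y => Subtype.ext (mul_smul_comm c x.1 y.1))

end Scalars

end Corner

/-- For a left `A`-module `M`, the subset `eM = {m | e • m = m}`, as a module over the
corner ring `eAe`. -/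
def CornerMod (e : A) (_he : e * e = e) (M : Type) [AddCommGroup M] [Module A M] : Type :=
  {m : M // e • m = m}

namespace CornerMod

variable {e : A} {he : e * e = e} {M : Type} [AddCommGroup M] [Module A M]

instance : Zero (CornerMod e he M) := ⟨⟨0, by simp⟩⟩
instance : Add (CornerMod e he M) :=
  ⟨fun x y => ⟨x.1 + y.1, by rw [smul_add, x.2, y.2]⟩⟩
instance : Neg (CornerMod e he M) := ⟨fun x => ⟨-x.1, by rw [smul_neg, x.2]⟩⟩

instance : AddCommGroup (CornerMod e he M) where
  add_assoc a b c := Subtype.ext (add_assoc _ _ _)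
  zero_add a := Subtype.ext (zero_add _)
  add_zero a := Subtype.ext (add_zero _)
  add_comm a b := Subtype.ext (add_comm _ _)
  neg_add_cancel a := Subtype.ext (neg_add_cancel _)
  nsmul := nsmulRec
  zsmul := zsmulRec

instance : SMul (Corner e he) (CornerMod e he M) :=
  ⟨fun c m => ⟨c.1 • m.1, by rw [smul_smul, c.2.1]⟩⟩

instance instModule : Module (Corner e he) (CornerMod e he M) where
  one_smul m := Subtype.ext m.2
  mul_smul x y m := Subtype.ext (mul_smul x.1 y.1 m.1)
  smul_zero x := Subtype.ext (smul_zero x.1)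
  smul_add x m m' := Subtype.ext (smul_add x.1 m.1 m'.1)
  add_smul x y m := Subtype.ext (add_smul x.1 y.1 m.1)
  zero_smul m := Subtype.ext (zero_smul A m.1)

end CornerMod

/-- The space `eAf = {x : A | e * x = x ∧ x * f = x}`, a left `eAe`-module and a right
`fAf`-module. -/
def Sandwich (e f : A) : Type := {x : A // e * x = x ∧ x * f = x}

namespace Sandwich

variable {e f : A} {he : e * e = e} {hf : f * f = f}

instance : Zero (Sandwich e f) := ⟨⟨0, by simp, by simp⟩⟩
instance : Add (Sandwich e f) :=
  ⟨fun x y => ⟨x.1 + y.1, by rw [mul_add, x.2.1, y.2.1], by rw [add_mul, x.2.2, y.2.2]⟩⟩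
instance : Neg (Sandwich e f) :=
  ⟨fun x => ⟨-x.1, by rw [mul_neg, x.2.1], by rw [neg_mul, x.2.2]⟩⟩

instance : AddCommGroup (Sandwich e f) where
  add_assoc a b c := Subtype.ext (add_assoc _ _ _)
  zero_add a := Subtype.ext (zero_add _)
  add_zero a := Subtype.ext (add_zero _)
  add_comm a b := Subtype.ext (add_comm _ _)
  neg_add_cancel a := Subtype.ext (neg_add_cancel _)
  nsmul := nsmulRec
  zsmul := zsmulRec

/-- Left action of the corner ring `eAe` on `eAf`. -/
instance : SMul (Corner e he) (Sandwich e f) :=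
  ⟨fun c x => ⟨c.1 * x.1, by rw [← mul_assoc, c.2.1], by rw [mul_assoc, x.2.2]⟩⟩

instance instModuleLeft : Module (Corner e he) (Sandwich e f) where
  one_smul x := Subtype.ext x.2.1
  mul_smul c d x := Subtype.ext (mul_assoc _ _ _)
  smul_zero c := Subtype.ext (mul_zero _)
  smul_add c x y := Subtype.ext (mul_add _ _ _)
  add_smul c d x := Subtype.ext (add_mul _ _ _)
  zero_smul x := Subtype.ext (zero_mul _)

/-- Right action of the corner ring `fAf` on `eAf`, as a left action of the opposite ring. -/
instance : SMul (Corner f hf)ᵐᵒᵖ (Sandwich e f) :=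
  ⟨fun c x => ⟨x.1 * c.unop.1, by rw [← mul_assoc, x.2.1], by rw [mul_assoc, c.unop.2.2]⟩⟩

instance instModuleRight : Module (Corner f hf)ᵐᵒᵖ (Sandwich e f) where
  one_smul x := Subtype.ext x.2.2
  mul_smul c d x := Subtype.ext (mul_assoc _ _ _).symm
  smul_zero c := Subtype.ext (zero_mul _)
  smul_add c x y := Subtype.ext (add_mul _ _ _)
  add_smul c d x := Subtype.ext (mul_add _ _ _)
  zero_smul x := Subtype.ext (mul_zero _)

end Sandwich

/-- The element `e * a * e` of the corner ring `eAe`. -/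
def cornEl {e : A} (he : e * e = e) (a : A) : Corner e he :=
  ⟨e * a * e, by conv_lhs => rw [← mul_assoc, ← mul_assoc, he], by rw [mul_assoc, he]⟩
def LIdeal (e : A) : Type := {x : A // x * e = x}
namespace LIdeal
variable {e : A}
instance : Zero (LIdeal e) := ⟨⟨0, by simp⟩⟩
instance : Add (LIdeal e) := ⟨fun x y => ⟨x.1 + y.1, by rw [add_mul, x.2, y.2]⟩⟩
instance : Neg (LIdeal e) := ⟨fun x => ⟨-x.1, by rw [neg_mul, x.2]⟩⟩
instance : AddCommGroup (LIdeal e) where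
  add_assoc a b c := Subtype.ext (add_assoc _ _ _)
  zero_add a := Subtype.ext (zero_add _)
  add_zero a := Subtype.ext (add_zero _)
  add_comm a b := Subtype.ext (add_comm _ _)
  neg_add_cancel a := Subtype.ext (neg_add_cancel _)
  nsmul := nsmulRec
  zsmul := zsmulRec
instance : SMul A (LIdeal e) := ⟨fun a x => ⟨a * x.1, by rw [mul_assoc, x.2]⟩⟩
instance instModuleA : Module A (LIdeal e) where
  one_smul x := Subtype.ext (one_mul _)
  mul_smul a b x := Subtype.ext (mul_assoc _ _ _)
  smul_zero a := Subtype.ext (mul_zero _)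
  smul_add a x y := Subtype.ext (mul_add _ _ _)
  add_smul a b x := Subtype.ext (add_mul _ _ _)
  zero_smul x := Subtype.ext (zero_mul _)
section Scalars
variable {k : Type} [CommRing k] [Algebra k A]
instance : SMul k (LIdeal e) := ⟨fun c x => ⟨c • x.1, by rw [smul_mul_assoc, x.2]⟩⟩
instance instModulek : Module k (LIdeal e) where
  one_smul x := Subtype.ext (one_smul k x.1)
  mul_smul c d x := Subtype.ext (mul_smul c d x.1)
  smul_zero c := Subtype.ext (smul_zero c)
  smul_add c x y := Subtype.ext (smul_add c x.1 y.1)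
  add_smul c d x := Subtype.ext (add_smul c d x.1)
  zero_smul x := Subtype.ext (zero_smul k x.1)
end Scalars
end LIdeal

def RIdeal (f : A) : Type := {x : A // f * x = x}
namespace RIdeal
variable {f : A}
instance : Zero (RIdeal f) := ⟨⟨0, by simp⟩⟩
instance : Add (RIdeal f) := ⟨fun x y => ⟨x.1 + y.1, by rw [mul_add, x.2, y.2]⟩⟩
instance : Neg (RIdeal f) := ⟨fun x => ⟨-x.1, by rw [mul_neg, x.2]⟩⟩
instance : AddCommGroup (RIdeal f) where
  add_assoc a b c := Subtype.ext (add_assoc _ _ _)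
  zero_add a := Subtype.ext (zero_add _)
  add_zero a := Subtype.ext (add_zero _)
  add_comm a b := Subtype.ext (add_comm _ _)
  neg_add_cancel a := Subtype.ext (neg_add_cancel _)
  nsmul := nsmulRec
  zsmul := zsmulRec
section Scalars
variable {k : Type} [CommRing k] [Algebra k A]
instance : SMul k (RIdeal f) := ⟨fun c x => ⟨c • x.1, by rw [mul_smul_comm, x.2]⟩⟩
instance instModulek : Module k (RIdeal f) where
  one_smul x := Subtype.ext (one_smul k x.1)
  mul_smul c d x := Subtype.ext (mul_smul c d x.1)
  smul_zero c := Subtype.ext (smul_zero c)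
  smul_add c x y := Subtype.ext (smul_add c x.1 y.1)
  add_smul c d x := Subtype.ext (add_smul c d x.1)
  zero_smul x := Subtype.ext (zero_smul k x.1)
end Scalars
end RIdeal

section Duals
variable (k : Type) [CommRing k] {A : Type} [Ring A] [Algebra k A]

/-- Right multiplication by `a : A` on the right ideal `fA`, as a `k`-linear map. -/
def rmulR {f : A} (a : A) : RIdeal (A := A) f →ₗ[k] RIdeal (A := A) f where
  toFun m := ⟨m.1 * a, by rw [← mul_assoc, m.2]⟩
  map_add' x y := Subtype.ext (add_mul _ _ _)
  map_smul' c x := Subtype.ext (smul_mul_assoc _ _ _)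

/-- Left multiplication by `b : A` on the left ideal `Ae`, as a `k`-linear map. -/
def lmulL {e : A} (b : A) : LIdeal (A := A) e →ₗ[k] LIdeal (A := A) e where
  toFun m := ⟨b * m.1, by rw [mul_assoc, m.2]⟩
  map_add' x y := Subtype.ext (mul_add _ _ _)
  map_smul' c x := Subtype.ext (mul_smul_comm _ _ _)

variable {f e : A}

/-- `D(fA) = Hom_k(fA, k)` is a left `A`-module via `(a • φ) m = φ (m * a)`. -/
instance : SMul A (RIdeal (A := A) f →ₗ[k] k) := ⟨fun a φ => φ.comp (rmulR k a)⟩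

instance DualRIdeal.instModuleA : Module A (RIdeal (A := A) f →ₗ[k] k) where
  one_smul φ := LinearMap.ext fun m => congrArg φ (Subtype.ext (mul_one m.1))
  mul_smul a b φ := LinearMap.ext fun m => congrArg φ (Subtype.ext (mul_assoc m.1 a b).symm)
  smul_zero a := LinearMap.ext fun m => rfl
  smul_add a φ ψ := LinearMap.ext fun m => rfl
  add_smul a b φ := LinearMap.ext fun m => by
    have h : rmulR k (f := f) (a + b) m = rmulR k a m + rmulR k b m :=
      Subtype.ext (mul_add m.1 a b)
    show φ (rmulR k (a + b) m) = φ (rmulR k a m) + φ (rmulR k b m)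
    rw [h, map_add]
  zero_smul φ := LinearMap.ext fun m => by
    have h : rmulR k (f := f) (0 : A) m = 0 := Subtype.ext (mul_zero m.1)
    show φ (rmulR k (0 : A) m) = 0
    rw [h, map_zero]

/-- `D(Ae) = Hom_k(Ae, k)` is a right `A`-module, i.e. a left `Aᵐᵒᵖ`-module, via
`(φ • a) m = φ (a * m)`. -/
instance : SMul Aᵐᵒᵖ (LIdeal (A := A) e →ₗ[k] k) := ⟨fun a φ => φ.comp (lmulL k a.unop)⟩

instance DualLIdeal.instModuleAop : Module Aᵐᵒᵖ (LIdeal (A := A) e →ₗ[k] k) where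
  one_smul φ := LinearMap.ext fun m => congrArg φ (Subtype.ext (one_mul m.1))
  mul_smul a b φ := LinearMap.ext fun m =>
    congrArg φ (Subtype.ext (mul_assoc b.unop a.unop m.1))
  smul_zero a := LinearMap.ext fun m => rfl
  smul_add a φ ψ := LinearMap.ext fun m => rfl
  add_smul a b φ := LinearMap.ext fun m => by
    have h : lmulL k (e := e) ((a + b).unop) m = lmulL k a.unop m + lmulL k b.unop m :=
      Subtype.ext (add_mul a.unop b.unop m.1)
    show φ (lmulL k ((a + b).unop) m) = φ (lmulL k a.unop m) + φ (lmulL k b.unop m)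
    rw [h, map_add]
  zero_smul φ := LinearMap.ext fun m => by
    have h : lmulL k (e := e) ((0 : Aᵐᵒᵖ).unop) m = 0 := Subtype.ext (zero_mul m.1)
    show φ (lmulL k ((0 : Aᵐᵒᵖ).unop) m) = 0
    rw [h, map_zero]

/-- Left multiplication by `a : A` on `A`, as a map of right `A`-modules. -/
def lmulOp (a : A) : A →ₗ[Aᵐᵒᵖ] A where
  toFun x := a * x
  map_add' := mul_add a
  map_smul' b x := by
    simp only [MulOpposite.smul_eq_mul_unop, RingHom.id_apply, mul_assoc]

/-- `Hom_{Aᵒᵖ}(D(Ae), A)` is a left `A`-module via `(a • ψ) φ = a * ψ φ`. -/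
instance : SMul A ((LIdeal (A := A) e →ₗ[k] k) →ₗ[Aᵐᵒᵖ] A) :=
  ⟨fun a ψ => (lmulOp a).comp ψ⟩

instance HomDualA.instModuleA : Module A ((LIdeal (A := A) e →ₗ[k] k) →ₗ[Aᵐᵒᵖ] A) where
  one_smul ψ := LinearMap.ext fun φ => one_mul _
  mul_smul a b ψ := LinearMap.ext fun φ => mul_assoc _ _ _
  smul_zero a := LinearMap.ext fun φ => mul_zero _
  smul_add a ψ χ := LinearMap.ext fun φ => mul_add _ _ _
  add_smul a b ψ := LinearMap.ext fun φ => add_mul _ _ _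
  zero_smul ψ := LinearMap.ext fun φ => zero_mul _

end Duals
/-! ### Stratification -/

section Strat

variable (A : Type) [Ring A] {n : ℕ} (e : Fin n → A)

/-- The left ideal `Ae_i`, as a submodule of the left regular module. -/
abbrev stdIdeal (i : Fin n) : Submodule A A := Submodule.span A {e i}

/-- The left submodule `Σ_{l > i} A e_l A e_i` of `A`. -/
abbrev stdTrace (i : Fin n) : Submodule A A :=
  Submodule.span A {x : A | ∃ l : Fin n, i < l ∧ ∃ b : A, x = e l * b * e i}

/-- The standard module `Δ_i = Ae_i / (Σ_{l>i} A e_l A e_i)`. -/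
abbrev StdMod (i : Fin n) :=
  ↥(stdIdeal A e i) ⧸ (Submodule.comap (stdIdeal A e i).subtype (stdTrace A e i))

/-- The submodule `Σ_{j ≥ i} A e_j (rad A) e_i` of `A`, where `rad A` is the Jacobson
radical of `A`. -/
abbrev properTrace (i : Fin n) : Submodule A A :=
  Submodule.span A {x : A | ∃ j : Fin n, i ≤ j ∧
    ∃ r ∈ Ideal.jacobson (⊥ : Ideal A), x = e j * r * e i}

/-- The proper standard module `Δ̄_i = Ae_i / (Σ_{j ≥ i} A e_j (rad A) e_i)`. -/
abbrev PStdMod (i : Fin n) :=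
  ↥(stdIdeal A e i) ⧸ (Submodule.comap (stdIdeal A e i).subtype (properTrace A e i))

/-- `M` admits a filtration `0 = M_0 ⊆ M_1 ⊆ ⋯ ⊆ M_r = M` whose successive quotients are
standard modules; i.e. `M ∈ F(Δ)`. -/
def HasStdFiltration (M : Type) [AddCommGroup M] [Module A M] : Prop :=
  ∃ (r : ℕ) (F : Fin (r + 1) → Submodule A M), Monotone F ∧ F 0 = ⊥ ∧ F (Fin.last r) = ⊤ ∧
    ∀ t : Fin r, ∃ i : Fin n,
      Nonempty ((↥(F t.succ) ⧸ (Submodule.comap (F t.succ).subtype (F t.castSucc)))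
        ≃ₗ[A] StdMod A e i)

/-- `M` admits a filtration `0 = M_0 ⊆ M_1 ⊆ ⋯ ⊆ M_r = M` whose successive quotients are
direct summands of standard modules. -/
def HasStdSummandFiltration (M : Type) [AddCommGroup M] [Module A M] : Prop :=
  ∃ (r : ℕ) (F : Fin (r + 1) → Submodule A M), Monotone F ∧ F 0 = ⊥ ∧ F (Fin.last r) = ⊤ ∧
    ∀ t : Fin r, ∃ (i : Fin n) (p q : Submodule A (StdMod A e i)), IsCompl p q ∧
      Nonempty ((↥(F t.succ) ⧸ (Submodule.comap (F t.succ).subtype (F t.castSucc)))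
        ≃ₗ[A] ↥p)

/-- The algebra `A` is directed with respect to the index order of the idempotents `e_i`:
`e_j A e_i = 0` whenever `j < i`. -/
def IsDirectedAlgebra : Prop := ∀ i j : Fin n, j < i → ∀ a : A, e j * a * e i = 0

end Strat

/-- `ProjDimLE A d M` : the left `A`-module `M` has projective dimension at most `d`,
i.e. admits a projective resolution of length at most `d`. -/
def ProjDimLE (A : Type) [Ring A] : ℕ → (M : Type) → [AddCommGroup M] → [Module A M] → Prop
  | 0, M, _, _ => Module.Projective A M
  | (d + 1), M, _, _ => ∃ (P : Type) (_ : AddCommGroup P) (_ : Module A P)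
      (f : P →ₗ[A] M), Module.Projective A P ∧ Function.Surjective f ∧
        ProjDimLE A d ↥(LinearMap.ker f)

/-- A nonzero module which is not the internal direct sum of two nonzero submodules. -/
def IsIndecModule (A : Type) [Ring A] (M : Type) [AddCommGroup M] [Module A M] : Prop :=
  Nontrivial M ∧ ∀ p q : Submodule A M, IsCompl p q → p = ⊥ ∨ q = ⊥

end

/-! ### Finite free modules over a general ring -/

/-- `M` is free of finite rank over `R` (with a basis indexed by some `Fin n`). -/
def FinFree (R M : Type) [Ring R] [AddCommGroup M] [Module R M] : Prop :=
  ∃ n : ℕ, Nonempty (Module.Basis (Fin n) R M)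

section LinearAlgebra

open Module

variable {R : Type} [Ring R]

lemma FinFree.of_equiv {M N : Type} [AddCommGroup M] [Module R M] [AddCommGroup N] [Module R N]
    (φ : M ≃ₗ[R] N) (h : FinFree R M) : FinFree R N := by
  obtain ⟨n, ⟨b⟩⟩ := h
  exact ⟨n, ⟨b.map φ⟩⟩

lemma FinFree.of_fintype {ι M : Type} [Fintype ι] [AddCommGroup M] [Module R M]
    (b : Basis ι R M) : FinFree R M :=
  ⟨Fintype.card ι, ⟨b.reindex (Fintype.equivFin ι)⟩⟩

lemma FinFree.of_subsingleton {M : Type} [AddCommGroup M] [Module R M] [Subsingleton M] :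
    FinFree R M :=
  ⟨0, ⟨Basis.empty M⟩⟩

/-- An extension of finite free modules is finite free, since the sequence splits. -/
lemma FinFree.of_exact {M' M M'' : Type} [AddCommGroup M'] [Module R M'] [AddCommGroup M]
    [Module R M] [AddCommGroup M''] [Module R M''] (f : M' →ₗ[R] M) (g : M →ₗ[R] M'')
    (hf : Function.Injective f) (hg : Function.Surjective g) (hfg : Function.Exact f g)
    (h' : FinFree R M') (h'' : FinFree R M'') : FinFree R M := by
  obtain ⟨n', ⟨b'⟩⟩ := h'
  obtain ⟨n'', ⟨b''⟩⟩ := h''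
  have : Module.Projective R M'' := Module.Projective.of_basis b''
  obtain ⟨l, hl⟩ := Module.projective_lifting_property g LinearMap.id hg
  let E := (hfg.splitSurjectiveEquiv hf ⟨l, hl⟩).1
  exact FinFree.of_fintype ((b'.prod b'').map E.symm)

/-- If a nonzero `s` kills all nonunits on the left, then dividing a finite free module by a
torsion-free element `v` leaves a finite free module: some coordinate of `v` is a unit, for
otherwise `s • v = 0`, and then `v` can replace the corresponding basis vector. -/
lemma FinFree.quotient_span_singleton {s : R} (hs : s ≠ 0) (hs' : ∀ r : R, ¬ IsUnit r → s * r = 0)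
    {Y : Type} [AddCommGroup Y] [Module R Y] (hY : FinFree R Y) (v : Y)
    (hv : ∀ r : R, r • v = 0 → r = 0) : FinFree R (Y ⧸ Submodule.span R {v}) := by
  obtain ⟨n, ⟨b⟩⟩ := hY
  obtain ⟨i, hi⟩ : ∃ i, IsUnit (b.repr v i) := by
    by_contra! hcon
    refine hs (hv s ?_)
    apply b.repr.injective
    ext i
    simpa using hs' _ (hcon i)
  obtain ⟨u, hu⟩ := hi
  -- The map `x ↦ (x_j - x_i v_i⁻¹ v_j)_{j ≠ i}` is onto with kernel `R v`.
  let φ : Y →ₗ[R] ({j : Fin n // j ≠ i} → R) :=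
    LinearMap.pi fun j => b.coord j.1 -
      (LinearMap.toSpanSingleton R R ((↑u⁻¹ : R) * b.repr v j.1)) ∘ₗ b.coord i
  have hφ : ∀ x j, φ x j = b.repr x j.1 - b.repr x i * (↑u⁻¹ * b.repr v j.1) := by
    intro x j
    simp [φ]
  have hsurj : Function.Surjective φ := by
    intro c
    refine ⟨∑ j : {j : Fin n // j ≠ i}, c j • b j.1, ?_⟩
    have h1 : ∀ l : Fin n, b.repr (∑ j : {j : Fin n // j ≠ i}, c j • b j.1) l
        = ∑ j : {j : Fin n // j ≠ i}, if j.1 = l then c j else 0 := by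
      intro l
      simp [Finsupp.single_apply]
    funext j
    rw [hφ, h1, h1]
    have h2 : ∀ x : {j : Fin n // j ≠ i}, (x.1 = j.1) = (x = j) := by
      intro x; rw [Subtype.ext_iff]
    have h3 : ∀ x : {j : Fin n // j ≠ i}, (x.1 = i) = False := by
      intro x; simpa using x.2
    simp [h2, h3]
  have hker : LinearMap.ker φ = Submodule.span R {v} := by
    ext x
    rw [LinearMap.mem_ker, Submodule.mem_span_singleton]
    constructor
    · intro hx
      refine ⟨b.repr x i * ↑u⁻¹, ?_⟩
      apply b.repr.injective
      ext j
      by_cases hj : j = i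
      · subst hj
        simp [← hu, mul_assoc]
      · have h1 := congrFun hx ⟨j, hj⟩
        rw [hφ] at h1
        simp only [Pi.zero_apply, sub_eq_zero] at h1
        simp [h1, mul_assoc]
    · rintro ⟨r, rfl⟩
      funext j
      rw [hφ]
      have : r * ↑u * (↑u⁻¹ * b.repr v j.1) = r * b.repr v j.1 := by
        rw [mul_assoc, ← mul_assoc (↑u : R)]; simp
      simp [← hu, this]
  have E := (Submodule.quotEquivOfEq _ _ hker).symm.trans (φ.quotKerEquivOfSurjective hsurj)
  exact FinFree.of_equiv E.symm (FinFree.of_fintype (Pi.basisFun R {j : Fin n // j ≠ i}))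

/-- Under the same hypothesis on `R`, the cokernel of a monomorphism between finite free modules
is finite free. -/
lemma FinFree.coker {s : R} (hs : s ≠ 0) (hs' : ∀ r : R, ¬ IsUnit r → s * r = 0) (m : ℕ) :
    ∀ {Y Z : Type} [AddCommGroup Y] [Module R Y] [AddCommGroup Z] [Module R Z]
      (g : Y →ₗ[R] Z) (_ : Function.Surjective g) (b : Fin m → Y) (_ : LinearIndependent R b)
      (_ : LinearMap.ker g = Submodule.span R (Set.range b)) (_ : FinFree R Y), FinFree R Z := by
  induction m with
  | zero =>
    intro Y Z _ _ _ _ g hg b hb hker hY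
    have h0 : LinearMap.ker g = ⊥ := by rw [hker]; simp
    exact FinFree.of_equiv (LinearEquiv.ofBijective g ⟨LinearMap.ker_eq_bot.1 h0, hg⟩) hY
  | succ m ih =>
    intro Y Z _ _ _ _ g hg b hb hker hY
    let W := Submodule.span R {b 0}
    have hWker : W ≤ LinearMap.ker g := by
      rw [hker]
      exact Submodule.span_mono (by simp)
    refine ih (W.liftQ g hWker) ?_ (fun t => W.mkQ (b t.succ)) ?_ ?_
      (FinFree.quotient_span_singleton hs hs' hY (b 0) ?_)
    · intro z
      obtain ⟨y, rfl⟩ := hg z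
      exact ⟨W.mkQ y, by simp⟩
    · rw [Fintype.linearIndependent_iff]
      intro c hc
      have h1 : W.mkQ (∑ t, c t • b t.succ) = 0 := by simpa using hc
      rw [Submodule.mkQ_apply, Submodule.Quotient.mk_eq_zero,
        Submodule.mem_span_singleton] at h1
      obtain ⟨r, hr⟩ := h1
      rw [Fintype.linearIndependent_iff] at hb
      have h2 := hb (Fin.cons (-r) c) (by simp [Fin.sum_univ_succ, hr])
      intro t
      simpa using h2 t.succ
    · rw [Submodule.ker_liftQ, hker, Submodule.map_span]
      have : Set.range b = insert (b 0) (Set.range fun t : Fin m => b t.succ) := by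
        ext y
        simp [Fin.exists_fin_succ, eq_comm]
      rw [this, Set.image_insert_eq, ← Set.range_comp]
      have h0 : W.mkQ (b 0) = 0 := by
        simp [W, Submodule.mem_span_singleton_self]
      rw [h0, Submodule.span_insert_zero]
      rfl
    · intro r hr
      rw [Fintype.linearIndependent_iff] at hb
      simpa using hb (Fin.cons r 0) (by simp [Fin.sum_univ_succ, hr]) 0

/-- In a nonzero finite-dimensional algebra whose nonunits are nilpotent, some nonzero `s`
satisfies `s * r = 0` for every nonunit `r`: any `s ≠ 0` with `s R` of minimal dimension works. -/
lemma exists_annihilator_nonunits (k : Type) [Field k] [Algebra k R] [FiniteDimensional k R]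
    [Nontrivial R] (hR : ∀ r : R, ¬ IsUnit r → IsNilpotent r) :
    ∃ s : R, s ≠ 0 ∧ ∀ r : R, ¬ IsUnit r → s * r = 0 := by
  classical
  let d : R → ℕ := fun s => Module.finrank k (LinearMap.range (LinearMap.mulLeft k s))
  have hex : ∃ m, ∃ s : R, s ≠ 0 ∧ d s = m := ⟨_, 1, one_ne_zero, rfl⟩
  obtain ⟨s, hs, hds⟩ := Nat.find_spec hex
  refine ⟨s, hs, fun r hr => ?_⟩
  by_contra hsr
  have hle : LinearMap.range (LinearMap.mulLeft k (s * r))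
      ≤ LinearMap.range (LinearMap.mulLeft k s) := by
    rintro _ ⟨t, rfl⟩
    exact ⟨r * t, by simp⟩
  have hmin : d s ≤ d (s * r) := by
    rw [hds]
    exact Nat.find_min' hex ⟨s * r, hsr, rfl⟩
  have heq := Submodule.eq_of_le_of_finrank_le hle hmin
  obtain ⟨t, ht⟩ : s ∈ LinearMap.range (LinearMap.mulLeft k (s * r)) := by
    rw [heq]
    exact ⟨1, by simp⟩
  have hrt : ¬ IsUnit (r * t) := by
    intro hu
    obtain ⟨m, hm⟩ := hR r hr
    obtain ⟨w, hw⟩ := hu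
    have h1 : r * (t * ↑w⁻¹) = 1 := by rw [← mul_assoc, ← hw]; simp
    have h2 : ∀ j : ℕ, r ^ j * (t * ↑w⁻¹) ^ j = 1 := by
      intro j
      induction j with
      | zero => simp
      | succ j ih =>
        rw [pow_succ, pow_succ', mul_assoc, ← mul_assoc r, h1, one_mul, ih]
    have := h2 m
    rw [hm, zero_mul] at this
    exact zero_ne_one this
  have hunit : IsUnit (1 - r * t) := (hR _ hrt).isUnit_one_sub
  have h0 : s * (1 - r * t) = 0 := by
    rw [mul_sub, mul_one, ← mul_assoc, sub_eq_zero]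
    exact ht.symm
  exact hs (hunit.mul_left_eq_zero.1 h0)

end LinearAlgebra

/-! ### Corner rings and corner modules -/

section CornerFacts

variable {A : Type} [Ring A] {e : A} {he : e * e = e}

/-- The map `eM → eN` induced by an `A`-linear map `M → N`. -/
def CornerMod.map {M N : Type} [AddCommGroup M] [Module A M] [AddCommGroup N] [Module A N]
    (f : M →ₗ[A] N) : CornerMod e he M →ₗ[Corner e he] CornerMod e he N where
  toFun m := ⟨f m.1, by rw [← map_smul, m.2]⟩
  map_add' x y := Subtype.ext (map_add f x.1 y.1)
  map_smul' c x := Subtype.ext (map_smul f c.1 x.1)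

lemma CornerMod.map_injective {M N : Type} [AddCommGroup M] [Module A M] [AddCommGroup N]
    [Module A N] {f : M →ₗ[A] N} (hf : Function.Injective f) :
    Function.Injective (CornerMod.map f : CornerMod e he M →ₗ[Corner e he] CornerMod e he N) :=
  fun _ _ h => Subtype.ext (hf (congrArg Subtype.val h))

lemma CornerMod.map_surjective {M N : Type} [AddCommGroup M] [Module A M] [AddCommGroup N]
    [Module A N] {f : M →ₗ[A] N} (hf : Function.Surjective f) :
    Function.Surjective
      (CornerMod.map f : CornerMod e he M →ₗ[Corner e he] CornerMod e he N) := by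
  intro z
  obtain ⟨y, hy⟩ := hf z.1
  refine ⟨⟨e • y, by rw [smul_smul, he]⟩, Subtype.ext ?_⟩
  show f (e • y) = z.1
  rw [map_smul, hy, z.2]

lemma CornerMod.map_exact {M N P : Type} [AddCommGroup M] [Module A M] [AddCommGroup N]
    [Module A N] [AddCommGroup P] [Module A P] {f : M →ₗ[A] N} {g : N →ₗ[A] P}
    (hf : Function.Injective f) (hfg : Function.Exact f g) :
    Function.Exact (CornerMod.map f : CornerMod e he M →ₗ[Corner e he] CornerMod e he N)
      (CornerMod.map g : CornerMod e he N →ₗ[Corner e he] CornerMod e he P) := by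
  intro y
  constructor
  · intro hy
    obtain ⟨x, hx⟩ := (hfg y.1).1 (congrArg Subtype.val hy)
    exact ⟨⟨x, hf (by rw [map_smul, hx, y.2])⟩, Subtype.ext hx⟩
  · rintro ⟨x, rfl⟩
    exact Subtype.ext ((hfg (f x.1)).2 ⟨x.1, rfl⟩)

lemma Corner.finiteDimensional (k : Type) [Field k] [Algebra k A] [FiniteDimensional k A] :
    FiniteDimensional k (Corner e he) := by
  let ι : Corner e he →ₗ[k] A :=
    { toFun := fun x => x.1
      map_add' := fun _ _ => rfl
      map_smul' := fun _ _ => rfl }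
  exact FiniteDimensional.of_injective ι (fun _ _ h => Subtype.ext h)

/-- Fitting's lemma for right multiplication on `Ae`: if `Ae` is indecomposable, every nonunit of
`eAe` is nilpotent. -/
lemma Corner.isNilpotent_of_not_isUnit (k : Type) [Field k] [Algebra k A] [FiniteDimensional k A]
    (hind : IsIndecModule A ↥(Submodule.span A {e})) (r : Corner e he) (hr : ¬ IsUnit r) :
    IsNilpotent r := by
  have hmem : ∀ x : A, x ∈ Submodule.span A {e} ↔ x * e = x := by
    intro x
    rw [Submodule.mem_span_singleton]
    constructor
    · rintro ⟨a, rfl⟩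
      simp [mul_assoc, he]
    · intro h
      exact ⟨x, h⟩
  have : IsArtinian A A := isArtinian_of_tower k inferInstance
  have : IsNoetherian A A := isNoetherian_of_tower k inferInstance
  let ρ : Module.End A ↥(Submodule.span A {e}) :=
    { toFun := fun x => ⟨x.1 * r.1, (hmem _).2 (by rw [mul_assoc, r.2.2])⟩
      map_add' := fun x y => Subtype.ext (add_mul _ _ _)
      map_smul' := fun a x => Subtype.ext (mul_assoc _ _ _) }
  have hρ : ∀ (m : ℕ) (x : ↥(Submodule.span A {e})), ((ρ ^ m) x).1 = x.1 * (r ^ m).1 := by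
    intro m
    induction m with
    | zero => intro x; exact ((hmem _).1 x.2).symm
    | succ m ih =>
      intro x
      rw [pow_succ', Module.End.mul_apply, pow_succ]
      show ((ρ ^ m) x).1 * r.1 = x.1 * ((r ^ m).1 * r.1)
      rw [ih, mul_assoc]
  let e' : ↥(Submodule.span A {e}) := ⟨e, (hmem _).2 he⟩
  obtain ⟨N, hN⟩ := Filter.eventually_atTop.1 (LinearMap.eventually_isCompl_ker_pow_range_pow ρ)
  have hc := hN (N + 1) (Nat.le_succ N)
  rcases hind.2 _ _ hc with h | h
  · exfalso
    apply hr
    have htop : LinearMap.range (ρ ^ (N + 1)) = ⊤ := by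
      have := hc.sup_eq_top
      rwa [h, bot_sup_eq] at this
    have hinj : Function.Injective (ρ ^ (N + 1)) := LinearMap.ker_eq_bot.1 h
    obtain ⟨y, hy⟩ := LinearMap.range_eq_top.1 htop e'
    have hinj1 : Function.Injective ρ := by
      intro a b hab
      apply hinj
      rw [pow_succ, Module.End.mul_apply, Module.End.mul_apply, hab]
    have hz : ((ρ ^ N) y).1 * r.1 = e := by
      rw [pow_succ', Module.End.mul_apply] at hy
      exact congrArg Subtype.val hy
    -- `z` is a left inverse of `r` in `Ae`, and `e * z` a two-sided one in `eAe`.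
    let z : A := ((ρ ^ N) y).1
    have hze : z * e = z := (hmem _).1 ((ρ ^ N) y).2
    let w : Corner e he := ⟨e * z, by rw [← mul_assoc, he], by rw [mul_assoc, hze]⟩
    have hwr : w * r = 1 := Subtype.ext (by
      show e * z * r.1 = e
      rw [mul_assoc, hz, he])
    have hrw : r * w = 1 := by
      have h1 : ρ ⟨(r * w).1, (hmem _).2 (r * w).2.2⟩ = ρ e' := Subtype.ext (by
        show (r * w * r).1 = (1 * r).1
        rw [mul_assoc, hwr, mul_one, one_mul])
      have h2 : (r * w).1 = e := congrArg Subtype.val (hinj1 h1)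
      exact Subtype.ext h2
    exact ⟨⟨r, w, hrw, hwr⟩, rfl⟩
  · refine ⟨N + 1, Subtype.ext ?_⟩
    have h1 : (ρ ^ (N + 1)) e' = 0 := by
      rw [LinearMap.range_eq_bot.1 h]; rfl
    have h2 := hρ (N + 1) e'
    rw [h1] at h2
    have h3 : e * (r ^ (N + 1)).1 = (r ^ (N + 1)).1 := (r ^ (N + 1)).2.1
    rw [← h3]
    exact h2.symm

end CornerFacts

/-! ### Standard filtrations over a directed algebra -/

section Filtrations

variable {A : Type} [Ring A] {n : ℕ} {e : Fin n → A}

/-- The trace `Σ_{l > i} A e_l A e_i` consists of the `x ∈ A e_i` with `e_i x = 0`; hence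
`e_l Δ_i = 0` for `l ≠ i` and `e_i Δ_i = e_i A e_i`. -/
lemma mem_stdTrace_iff (hsum : ∑ i, e i = 1) (hdir : IsDirectedAlgebra A e) (i : Fin n) {x : A}
    (hx : x * e i = x) : x ∈ stdTrace A e i ↔ e i * x = 0 := by
  constructor
  · intro h
    have key : ∀ a : A, e i * a * x = 0 := by
      clear hx
      induction h using Submodule.span_induction with
      | mem y hy =>
        obtain ⟨l, hl, b, rfl⟩ := hy
        intro a
        rw [← mul_assoc, ← mul_assoc, hdir l i hl, zero_mul, zero_mul]
      | zero => simp
      | add y z _ _ hy hz => intro a; rw [mul_add, hy, hz, add_zero]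
      | smul c y _ hy =>
        intro a
        rw [smul_eq_mul, ← mul_assoc, mul_assoc (e i), hy]
    simpa using key 1
  · intro h
    have h1 : x = ∑ l, e l * x := by rw [← Finset.sum_mul, hsum, one_mul]
    rw [h1]
    refine Submodule.sum_mem _ fun l _ => ?_
    rcases lt_trichotomy l i with hl | rfl | hl
    · rw [← hx, ← mul_assoc, hdir i l hl]
      exact Submodule.zero_mem _
    · rw [h]
      exact Submodule.zero_mem _
    · exact Submodule.subset_span ⟨l, hl, x, by rw [mul_assoc, hx]⟩

lemma mem_stdIdeal_iff (hidem : ∀ i, e i * e i = e i) (i : Fin n) (x : A) :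
    x ∈ stdIdeal A e i ↔ x * e i = x := by
  rw [Submodule.mem_span_singleton]
  constructor
  · rintro ⟨a, rfl⟩
    simp [mul_assoc, hidem]
  · intro h
    exact ⟨x, h⟩

lemma finFree_corner_stdMod (hidem : ∀ i, e i * e i = e i) (horth : ∀ i j, i ≠ j → e i * e j = 0)
    (hsum : ∑ i, e i = 1) (hdir : IsDirectedAlgebra A e) (i j : Fin n) :
    FinFree (Corner (e j) (hidem j)) (CornerMod (e j) (hidem j) (StdMod A e i)) := by
  have hmk : ∀ x : ↥(stdIdeal A e i), (Submodule.Quotient.mk x : StdMod A e i) = 0 ↔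
      e i * x.1 = 0 := by
    intro x
    rw [Submodule.Quotient.mk_eq_zero, Submodule.mem_comap]
    exact mem_stdTrace_iff hsum hdir i ((mem_stdIdeal_iff hidem i _).1 x.2)
  by_cases hij : i = j
  · subst hij
    -- `c ↦ [c]` is an isomorphism from `e_i A e_i` onto `e_i Δ_i`.
    let φ : Corner (e i) (hidem i) →ₗ[Corner (e i) (hidem i)]
        CornerMod (e i) (hidem i) (StdMod A e i) :=
      { toFun := fun c => ⟨Submodule.Quotient.mk ⟨c.1, (mem_stdIdeal_iff hidem i _).2 c.2.2⟩, by
          rw [← Submodule.Quotient.mk_smul]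
          congr 1
          exact Subtype.ext c.2.1⟩
        map_add' := fun _ _ => rfl
        map_smul' := fun _ _ => rfl }
    have hφ : Function.Bijective φ := by
      constructor
      · rw [injective_iff_map_eq_zero]
        intro c hc
        have h1 := (hmk _).1 (congrArg Subtype.val hc)
        exact Subtype.ext (c.2.1.symm.trans h1)
      · rintro ⟨q, hq⟩
        obtain ⟨x, rfl⟩ := Submodule.Quotient.mk_surjective _ q
        have hx := (mem_stdIdeal_iff hidem i _).1 x.2
        refine ⟨⟨e i * x.1, by rw [← mul_assoc, hidem], by rw [mul_assoc, hx]⟩, Subtype.ext ?_⟩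
        exact hq
    exact FinFree.of_equiv (LinearEquiv.ofBijective φ hφ)
      (FinFree.of_fintype (Module.Basis.singleton Unit (Corner (e i) (hidem i))))
  · have : Subsingleton (CornerMod (e j) (hidem j) (StdMod A e i)) := by
      refine subsingleton_of_forall_eq 0 ?_
      rintro ⟨q, hq⟩
      obtain ⟨x, rfl⟩ := Submodule.Quotient.mk_surjective _ q
      apply Subtype.ext
      show Submodule.Quotient.mk x = (0 : StdMod A e i)
      rw [← hq, ← Submodule.Quotient.mk_smul, hmk]
      show e i * (e j * x.1) = 0
      rw [← mul_assoc, horth i j hij, zero_mul]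
    exact FinFree.of_subsingleton

/-- If `M ∈ F(Δ)` then `e_j M` is a finite free `e_j A e_j`-module for each `j`. -/
lemma finFree_corner_of_hasStdFiltration (hidem : ∀ i, e i * e i = e i)
    (horth : ∀ i j, i ≠ j → e i * e j = 0) (hsum : ∑ i, e i = 1) (hdir : IsDirectedAlgebra A e)
    {M : Type} [AddCommGroup M] [Module A M] (hM : HasStdFiltration A e M) (j : Fin n) :
    FinFree (Corner (e j) (hidem j)) (CornerMod (e j) (hidem j) M) := by
  obtain ⟨r, F, hmono, h0, hlast, hF⟩ := hM
  have key : ∀ t : Fin (r + 1),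
      FinFree (Corner (e j) (hidem j)) (CornerMod (e j) (hidem j) ↥(F t)) := by
    intro t
    induction t using Fin.induction with
    | zero =>
      have : Subsingleton (CornerMod (e j) (hidem j) ↥(F 0)) := by
        refine subsingleton_of_forall_eq 0 ?_
        rintro ⟨⟨x, hx⟩, _⟩
        rw [h0, Submodule.mem_bot] at hx
        subst hx
        rfl
      exact FinFree.of_subsingleton
    | succ t ih =>
      obtain ⟨i, ⟨E⟩⟩ := hF t
      have hle : F t.castSucc ≤ F t.succ := hmono (Fin.castSucc_le_succ t)
      have hinj := Submodule.inclusion_injective hle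
      refine FinFree.of_exact (CornerMod.map (Submodule.inclusion hle))
        (CornerMod.map (E.toLinearMap ∘ₗ Submodule.mkQ _)) (CornerMod.map_injective hinj)
        (CornerMod.map_surjective (E.surjective.comp (Submodule.mkQ_surjective _)))
        (CornerMod.map_exact hinj ?_) ih (finFree_corner_stdMod hidem horth hsum hdir i j)
      intro y
      simp only [LinearMap.comp_apply, LinearEquiv.coe_coe, LinearEquiv.map_eq_zero_iff,
        Submodule.mkQ_apply, Submodule.Quotient.mk_eq_zero, Submodule.mem_comap,
        Submodule.subtype_apply]
      constructor
      · intro hy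
        exact ⟨⟨y.1, hy⟩, rfl⟩
      · rintro ⟨x, rfl⟩
        exact x.2
  have hl := key (Fin.last r)
  rw [hlast] at hl
  have hmap := (Submodule.topEquiv (R := A) (M := M))
  refine FinFree.of_equiv (LinearEquiv.ofBijective (CornerMod.map hmap.toLinearMap)
    ⟨CornerMod.map_injective hmap.injective, CornerMod.map_surjective hmap.surjective⟩) hl

/-- `StdChain A e N` says that the submodule `N` is the top of a finite chain of submodules of `M`
that starts at `⊥` and whose successive quotients are standard modules. -/
inductive StdChain (A : Type) [Ring A] {n : ℕ} (e : Fin n → A) {M : Type} [AddCommGroup M]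
    [Module A M] : Submodule A M → Prop
  | bot : StdChain A e ⊥
  | step (N N' : Submodule A M) (i : Fin n) (hN : StdChain A e N) (hle : N ≤ N')
      (E : Nonempty ((↥N' ⧸ Submodule.comap N'.subtype N) ≃ₗ[A] StdMod A e i)) :
      StdChain A e N'

lemma StdChain.exists_filtration {M : Type} [AddCommGroup M] [Module A M] {N : Submodule A M}
    (h : StdChain A e N) :
    ∃ (r : ℕ) (F : Fin (r + 1) → Submodule A M), Monotone F ∧ F 0 = ⊥ ∧ F (Fin.last r) = N ∧
      ∀ t : Fin r, ∃ i : Fin n,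
        Nonempty ((↥(F t.succ) ⧸ (Submodule.comap (F t.succ).subtype (F t.castSucc)))
          ≃ₗ[A] StdMod A e i) := by
  induction h with
  | bot => exact ⟨0, fun _ => ⊥, fun _ _ _ => le_rfl, rfl, rfl, fun t => t.elim0⟩
  | step N N' i hN hle E ih =>
    obtain ⟨r, F, hmono, h0, hlast, hF⟩ := ih
    refine ⟨r + 1, Fin.snoc (α := fun _ => Submodule A M) F N', ?_, ?_, ?_, ?_⟩
    · rw [Fin.monotone_iff_le_succ]
      intro t
      refine Fin.lastCases ?_ (fun t => ?_) t
      · rw [Fin.snoc_castSucc, Fin.succ_last, Fin.snoc_last, hlast]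
        exact hle
      · rw [Fin.snoc_castSucc, Fin.succ_castSucc, Fin.snoc_castSucc]
        exact hmono (Fin.castSucc_le_succ t)
    · rw [← Fin.castSucc_zero, Fin.snoc_castSucc, h0]
    · rw [Fin.snoc_last]
    · intro t
      refine Fin.lastCases ?_ (fun t => ?_) t
      · refine ⟨i, ?_⟩
        rw [Fin.snoc_castSucc, Fin.succ_last, Fin.snoc_last, hlast]
        exact E
      · rw [Fin.snoc_castSucc, Fin.succ_castSucc, Fin.snoc_castSucc]
        exact hF t

/-- A criterion for `(N + A b) / N ≅ Δ_j`, for `b ∈ e_j M`: the annihilator of `b` modulo `N` in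
`A e_j` is `{a | e_j a = 0}`, which is the trace defining `Δ_j`. -/
lemma nonempty_equiv_stdMod (hidem : ∀ i, e i * e i = e i) (hsum : ∑ i, e i = 1)
    (hdir : IsDirectedAlgebra A e) {M : Type} [AddCommGroup M] [Module A M]
    (N N' : Submodule A M) (j : Fin n) (b : M) (hb : e j • b = b)
    (hN' : N' = N ⊔ Submodule.span A {b})
    (h : ∀ a : A, a * e j = a → (a • b ∈ N ↔ e j * a = 0)) :
    Nonempty ((↥N' ⧸ Submodule.comap N'.subtype N) ≃ₗ[A] StdMod A e j) := by
  have hbN' : b ∈ N' := by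
    rw [hN']
    exact Submodule.mem_sup_right (Submodule.mem_span_singleton_self b)
  let ψ : ↥(stdIdeal A e j) →ₗ[A] (↥N' ⧸ Submodule.comap N'.subtype N) :=
    (Submodule.mkQ _) ∘ₗ (LinearMap.toSpanSingleton A ↥N' ⟨b, hbN'⟩) ∘ₗ (stdIdeal A e j).subtype
  have hker : LinearMap.ker ψ = Submodule.comap (stdIdeal A e j).subtype (stdTrace A e j) := by
    ext x
    have hx := (mem_stdIdeal_iff hidem j _).1 x.2
    rw [LinearMap.mem_ker, Submodule.mem_comap]
    have h1 : ψ x = 0 ↔ x.1 • b ∈ N := by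
      simp only [ψ, LinearMap.comp_apply, Submodule.mkQ_apply, Submodule.Quotient.mk_eq_zero,
        Submodule.mem_comap]
      rfl
    rw [h1, h _ hx]
    exact (mem_stdTrace_iff hsum hdir j hx).symm
  have hsurj : Function.Surjective ψ := by
    intro q
    obtain ⟨⟨y, hy⟩, rfl⟩ := Submodule.Quotient.mk_surjective _ q
    have hy' := hy
    rw [hN', Submodule.mem_sup] at hy'
    obtain ⟨u, hu, v, hv, rfl⟩ := hy'
    obtain ⟨a, rfl⟩ := Submodule.mem_span_singleton.1 hv
    refine ⟨⟨a * e j, (mem_stdIdeal_iff hidem j _).2 (by rw [mul_assoc, hidem])⟩, ?_⟩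
    refine (Submodule.Quotient.eq _).2 ?_
    rw [Submodule.mem_comap]
    show (a * e j) • b - (u + a • b) ∈ N
    rw [mul_smul, hb, sub_add_cancel_right]
    exact N.neg_mem hu
  exact ⟨((Submodule.quotEquivOfEq _ _ hker).symm.trans
    (ψ.quotKerEquivOfSurjective hsurj)).symm⟩

/-- The submodule `⊕_{l ≥ m} e_l M` of `M`, described as `{x | e_l x = 0 for all l < m}`;
directedness makes it stable under `A`. The bound `m` ranges over `ℕ` so that `m = n` gives `⊥`. -/
def upperPart (hsum : ∑ i, e i = 1) (hdir : IsDirectedAlgebra A e) (M : Type) [AddCommGroup M]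
    [Module A M] (m : ℕ) : Submodule A M where
  carrier := {x | ∀ l : Fin n, l.1 < m → e l • x = 0}
  zero_mem' := by intro l _; simp
  add_mem' := by
    intro x y hx hy l hl
    rw [smul_add, hx l hl, hy l hl, add_zero]
  smul_mem' := by
    intro a x hx l hl
    have h1 : x = ∑ i, e i • x := by rw [← Finset.sum_smul, hsum, one_smul]
    rw [h1, Finset.smul_sum, Finset.smul_sum]
    refine Finset.sum_eq_zero fun i _ => ?_
    rcases le_or_gt i l with hi | hi
    · rw [hx i (lt_of_le_of_lt hi hl), smul_zero, smul_zero]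
    · rw [smul_smul, smul_smul, hdir i l hi, zero_smul]

lemma CornerMod.val_mem_span {f : A} {hf : f * f = f} {M : Type} [AddCommGroup M] [Module A M]
    (S : Set (CornerMod f hf M)) {v : CornerMod f hf M}
    (hv : v ∈ Submodule.span (Corner f hf) S) :
    v.1 ∈ Submodule.span A ((fun w : CornerMod f hf M => w.1) '' S) := by
  induction hv using Submodule.span_induction with
  | mem y hy => exact Submodule.subset_span ⟨y, hy, rfl⟩
  | zero => exact Submodule.zero_mem _
  | add y z _ _ hy hz => exact Submodule.add_mem _ hy hz
  | smul c y _ hy => exact Submodule.smul_mem _ c.1 hy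

/-- The projection `M → fM`, `x ↦ f x`. -/
def CornerMod.proj {f : A} (hf : f * f = f) {M : Type} [AddCommGroup M] [Module A M] (x : M) :
    CornerMod f hf M :=
  ⟨f • x, by rw [smul_smul, hf]⟩

lemma CornerMod.proj_mem_span {f : A} {hf : f * f = f} {M : Type} [AddCommGroup M] [Module A M]
    (S : Set (CornerMod f hf M)) {v : M}
    (hv : v ∈ Submodule.span A ((fun w : CornerMod f hf M => w.1) '' S)) :
    CornerMod.proj hf v ∈ Submodule.span (Corner f hf) S := by
  have key : ∀ a : A, CornerMod.proj hf (a • v) ∈ Submodule.span (Corner f hf) S := by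
    induction hv using Submodule.span_induction with
    | mem y hy =>
      obtain ⟨w, hw, rfl⟩ := hy
      intro a
      have : CornerMod.proj hf (a • w.1) = cornEl hf a • w := Subtype.ext (by
        show f • a • w.1 = (f * a * f) • w.1
        rw [mul_smul, mul_smul, w.2])
      rw [this]
      exact Submodule.smul_mem _ _ (Submodule.subset_span hw)
    | zero =>
      intro a
      have : CornerMod.proj hf (a • (0 : M)) = 0 := Subtype.ext (by
        show f • a • (0 : M) = 0
        simp)
      rw [this]
      exact Submodule.zero_mem _
    | add y z _ _ hy hz =>
      intro a
      have : CornerMod.proj hf (a • (y + z))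
          = CornerMod.proj hf (a • y) + CornerMod.proj hf (a • z) := Subtype.ext (by
        show f • a • (y + z) = f • a • y + f • a • z
        simp)
      rw [this]
      exact Submodule.add_mem _ (hy a) (hz a)
    | smul c y _ hy =>
      intro a
      rw [smul_smul]
      exact hy _
  simpa using key 1

/-- Passing from `⊕_{l > j} e_l M` to `⊕_{l ≥ j} e_l M` one basis vector of `e_j M` at a time adds
one copy of `Δ_j` per vector. -/
lemma StdChain.upperPart_step (hidem : ∀ i, e i * e i = e i)
    (horth : ∀ i j, i ≠ j → e i * e j = 0) (hsum : ∑ i, e i = 1) (hdir : IsDirectedAlgebra A e)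
    {M : Type} [AddCommGroup M] [Module A M] (j : Fin n)
    (hM : FinFree (Corner (e j) (hidem j)) (CornerMod (e j) (hidem j) M))
    (h : StdChain A e (upperPart hsum hdir M (j.1 + 1))) :
    StdChain A e (upperPart hsum hdir M j.1) := by
  obtain ⟨r, ⟨b⟩⟩ := hM
  let U := upperPart hsum hdir M (j.1 + 1)
  let S : ℕ → Set (CornerMod (e j) (hidem j) M) := fun t => b '' {s | s.1 < t}
  let N : ℕ → Submodule A M := fun t =>
    U ⊔ Submodule.span A ((fun w : CornerMod (e j) (hidem j) M => w.1) '' S t)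
  have hS : ∀ (t : ℕ) (ht : t < r), S (t + 1) = insert (b ⟨t, ht⟩) (S t) := by
    intro t ht
    have : {s : Fin r | s.1 < t + 1} = insert ⟨t, ht⟩ {s : Fin r | s.1 < t} := by
      ext s
      simp only [Set.mem_ofPred_eq, Set.mem_insert_iff, Fin.ext_iff]
      omega
    simp only [S, this, Set.image_insert_eq]
  have hNstep : ∀ (t : ℕ) (ht : t < r), N (t + 1) = N t ⊔ Submodule.span A {(b ⟨t, ht⟩).1} := by
    intro t ht
    simp only [N]
    rw [hS t ht, Set.image_insert_eq, Submodule.span_insert, sup_assoc]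
    congr 1
    exact sup_comm _ _
  have hchain : ∀ t : ℕ, t ≤ r → StdChain A e (N t) := by
    intro t
    induction t with
    | zero =>
      intro _
      have : N 0 = U := by simp [N, S]
      rw [this]
      exact h
    | succ t ih =>
      intro ht
      have ht' : t < r := ht
      refine StdChain.step (N t) _ j (ih ht'.le) (by rw [hNstep t ht']; exact le_sup_left)
        (nonempty_equiv_stdMod hidem hsum hdir _ _ j (b ⟨t, ht'⟩).1 (b ⟨t, ht'⟩).2
          (hNstep t ht') ?_)
      intro a ha
      have hb : e j • (b ⟨t, ht'⟩).1 = (b ⟨t, ht'⟩).1 := (b ⟨t, ht'⟩).2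
      constructor
      · intro hmem
        obtain ⟨u, hu, v, hv, huv⟩ := Submodule.mem_sup.1 hmem
        have hproj : CornerMod.proj (hidem j) v = cornEl (hidem j) a • b ⟨t, ht'⟩ :=
          Subtype.ext (by
            show e j • v = (e j * a * e j) • (b ⟨t, ht'⟩).1
            have hu' : e j • u = 0 := hu j (Nat.lt_succ_self _)
            rw [mul_smul, mul_smul, hb, ← huv, smul_add, hu', zero_add])
        have h1 := CornerMod.proj_mem_span _ hv
        rw [hproj] at h1
        have hli := linearIndependent_iff_eq_zero_of_smul_mem_span.1 b.linearIndependent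
        have h2 : cornEl (hidem j) a = 0 := by
          refine hli ⟨t, ht'⟩ _ (Submodule.span_mono (Set.image_mono ?_) h1)
          intro s hs
          refine ⟨trivial, fun hst => ?_⟩
          rw [Set.mem_singleton_iff] at hst
          subst hst
          exact lt_irrefl t hs
        have h3 : e j * a * e j = 0 := congrArg Subtype.val h2
        rwa [mul_assoc, ha] at h3
      · intro hja
        refine Submodule.mem_sup_left ?_
        intro l hl
        rcases (Nat.lt_succ_iff.1 hl).lt_or_eq with hlt | heq
        · rw [← ha, smul_smul, ← mul_assoc, hdir j l hlt, zero_smul]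
        · have : l = j := Fin.ext heq
          subst this
          rw [smul_smul, hja, zero_smul]
  have hfin : N r = upperPart hsum hdir M j.1 := by
    apply le_antisymm
    · refine sup_le (fun x hx l hl => hx l (Nat.lt_succ_of_lt hl)) ?_
      rw [Submodule.span_le]
      rintro _ ⟨w, _, rfl⟩ l hl
      have hlj : l ≠ j := fun hlj => by subst hlj; exact lt_irrefl _ hl
      show e l • w.1 = 0
      rw [← w.2, smul_smul, horth l j hlj, zero_smul]
    · intro x hx
      have h1 : x = (x - e j • x) + e j • x := by abel
      rw [h1]
      refine Submodule.add_mem_sup ?_ ?_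
      · intro l hl
        rw [smul_sub, smul_smul]
        rcases (Nat.lt_succ_iff.1 hl).lt_or_eq with hlt | heq
        · have hlj : l ≠ j := fun hlj => by subst hlj; exact lt_irrefl _ hlt
          rw [hx l hlt, horth l j hlj, zero_smul, sub_zero]
        · have : l = j := Fin.ext heq
          subst this
          rw [hidem, sub_self]
      · have hSr : S r = Set.range b := by
          ext w
          simp [S]
        have h2 : CornerMod.proj (hidem j) x ∈
            Submodule.span (Corner (e j) (hidem j)) (S r) := by
          rw [hSr, b.span_eq]
          trivial
        exact CornerMod.val_mem_span _ h2
  rw [← hfin]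
  exact hchain r le_rfl

/-- If every `e_j M` is finite free over `e_j A e_j`, then `M ∈ F(Δ)`. -/
lemma hasStdFiltration_of_finFree_corner (hidem : ∀ i, e i * e i = e i)
    (horth : ∀ i j, i ≠ j → e i * e j = 0) (hsum : ∑ i, e i = 1) (hdir : IsDirectedAlgebra A e)
    {M : Type} [AddCommGroup M] [Module A M]
    (hM : ∀ j, FinFree (Corner (e j) (hidem j)) (CornerMod (e j) (hidem j) M)) :
    HasStdFiltration A e M := by
  have hbot : upperPart hsum hdir M n = ⊥ := by
    rw [eq_bot_iff]
    intro x hx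
    rw [Submodule.mem_bot, ← one_smul A x, ← hsum, Finset.sum_smul]
    exact Finset.sum_eq_zero fun i _ => hx i i.2
  have htop : upperPart hsum hdir M 0 = ⊤ := by
    rw [eq_top_iff]
    intro x _ l hl
    exact absurd hl (Nat.not_lt_zero _)
  have key : StdChain A e (upperPart hsum hdir M 0) := by
    refine Nat.decreasingInduction (n := n)
      (motive := fun m _ => StdChain A e (upperPart hsum hdir M m)) ?_ ?_ (Nat.zero_le n)
    · intro m hm ih
      exact StdChain.upperPart_step hidem horth hsum hdir ⟨m, hm⟩ (hM ⟨m, hm⟩) ih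
    · rw [hbot]
      exact StdChain.bot
  rw [htop] at key
  exact key.exists_filtration

end Filtrations

/-- If the basic finite-dimensional algebra `A` is directed and standardly
stratified with respect to the index order, then `F(Δ)` is closed under cokernels of
monomorphisms. -/
theorem statement5
    (k : Type) [Field k] [IsAlgClosed k]
    (A : Type) [Ring A] [Algebra k A] [FiniteDimensional k A]
    {n : ℕ} (e : Fin n → A)
    (hidem : ∀ i, e i * e i = e i)
    (horth : ∀ i j, i ≠ j → e i * e j = 0)
    (hsum : ∑ i, e i = 1)
    (hprim : ∀ i, IsIndecModule A ↥(stdIdeal A e i))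
    (hbasic : ∀ i j, i ≠ j → IsEmpty (↥(stdIdeal A e i) ≃ₗ[A] ↥(stdIdeal A e j)))
    (hdir : IsDirectedAlgebra A e)
    (hss : HasStdFiltration A e A) :
    ∀ (X Y Z : Type) [AddCommGroup X] [AddCommGroup Y] [AddCommGroup Z]
        [Module A X] [Module A Y] [Module A Z],
      Module.Finite A X → Module.Finite A Y → Module.Finite A Z →
      ∀ (f : X →ₗ[A] Y) (g : Y →ₗ[A] Z), Function.Injective f → Function.Surjective g →
        LinearMap.range f = LinearMap.ker g →
        HasStdFiltration A e X → HasStdFiltration A e Y → HasStdFiltration A e Z := by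
  intro X Y Z _ _ _ _ _ _ _ _ _ f g hf hg hfg hX hY
  refine hasStdFiltration_of_finFree_corner hidem horth hsum hdir fun j => ?_
  have : FiniteDimensional k (Corner (e j) (hidem j)) := Corner.finiteDimensional k
  have : Nontrivial (Corner (e j) (hidem j)) := by
    refine ⟨1, 0, fun h10 => ?_⟩
    have hej : e j = 0 := congrArg Subtype.val h10
    obtain ⟨⟨x, hx⟩, ⟨y, hy⟩, hxy⟩ := (hprim j).1
    rw [mem_stdIdeal_iff hidem, hej, mul_zero] at hx hy
    exact hxy (Subtype.ext (hx.symm.trans hy))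
  obtain ⟨s, hs, hs'⟩ := exists_annihilator_nonunits k
    (Corner.isNilpotent_of_not_isUnit (he := hidem j) k (hprim j))
  have hexact : Function.Exact f g := LinearMap.exact_iff.2 hfg.symm
  obtain ⟨m, ⟨b⟩⟩ := finFree_corner_of_hasStdFiltration hidem horth hsum hdir hX j
  let fj : CornerMod (e j) (hidem j) X →ₗ[Corner (e j) (hidem j)] CornerMod (e j) (hidem j) Y :=
    CornerMod.map f
  refine FinFree.coker hs hs' m (CornerMod.map g) (CornerMod.map_surjective hg) (fj ∘ b) ?_ ?_
    (finFree_corner_of_hasStdFiltration hidem horth hsum hdir hY j)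
  · exact b.linearIndependent.map' fj (LinearMap.ker_eq_bot.2 (CornerMod.map_injective hf))
  · rw [LinearMap.exact_iff.1 (CornerMod.map_exact hf hexact), Set.range_comp,
      ← Submodule.map_span, b.span_eq, Submodule.map_top]
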